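/- Let t ∈ {1,…,T}, j ∈ S, and let n ∈ S^(t) satisfy n_ℓ = 1 for some (necessarily unique) ℓ ∈ S_AR. Then the forward quantity satisfies the recursion α^(t)_n(j) = f_t(j, n) · p_{ℓj} · Σ_{m=1}^{t} α^(t−1)_{n − 1 + m·e_ℓ}(ℓ), where n − 1 denotes the vector n minus the all-ones vector and e_ℓ is the ℓ-th standard basis vector of ℕ^k. -/

import Mathlib

open Finset

namespace MRS

/-- Time since the last visit to the regime with value `j` strictly before time `t`;
equals `t + 1` if that regime was never visited before time `t`. -/
def counter {M : ℕ} (r : ℕ → Fin M) (t : ℕ) (j : ℕ) : ℕ :=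
  if h : ((Finset.range t).filter fun τ => (r τ : ℕ) = j).Nonempty then
    t - ((Finset.range t).filter fun τ => (r τ : ℕ) = j).max' h
  else t + 1

/-- Counter vector for the `k` AR(1) regimes (the regimes with values `0, …, k-1`). -/
def nvec {M : ℕ} (k : ℕ) (r : ℕ → Fin M) (t : ℕ) : Fin k → ℕ :=
  fun j => counter r t (j : ℕ)

/-- Extend a finite path to a stream (values beyond the end repeat the last value;
they are never used for counters up to time `t`). -/
def pad {M t : ℕ} (r : Fin (t + 1) → Fin M) : ℕ → Fin M :=
  fun s => r ⟨min s t, Nat.lt_succ_of_le (min_le_right s t)⟩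

/-- The set `S^(t)` of possible counter vectors at time `t`: every entry lies in
`{1, …, t+1}`, at most `min t k` entries differ from `t+1`, and the entries different
from `t+1` are pairwise distinct. -/
def Sset (k t : ℕ) : Finset (Fin k → ℕ) :=
  (Fintype.piFinset fun _ : Fin k => Finset.Icc 1 (t + 1)).filter fun n =>
    (Finset.univ.filter fun j => n j ≠ t + 1).card ≤ min t k ∧
      ∀ i j : Fin k, i ≠ j → n i ≠ t + 1 → n j ≠ t + 1 → n i ≠ n j

/-- Weight of a (partial) path `r = (r_0, …, r_t)`:
`π_{r_0} f_0(r_0) ∏_{s=1}^t p_{r_{s-1} r_s} f_s(r_s, n_s(r))`. -/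
noncomputable def wpath {M : ℕ} (k : ℕ) (pi0 : Fin M → ℝ) (p : Fin M → Fin M → ℝ)
    (f0 : Fin M → ℝ) (f : ℕ → Fin M → (Fin k → ℕ) → ℝ) {t : ℕ}
    (r : Fin (t + 1) → Fin M) : ℝ :=
  pi0 (r 0) * f0 (r 0) *
    ∏ s ∈ Finset.Icc 1 t, p (pad r (s - 1)) (pad r s) * f s (pad r s) (nvec k (pad r) s)

/-- Forward quantity `α^(t)_n(j)`: total weight of partial paths ending in regime `j`
at time `t` with counter vector `n`. -/
noncomputable def alpha {M : ℕ} (k : ℕ) (pi0 : Fin M → ℝ) (p : Fin M → Fin M → ℝ)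
    (f0 : Fin M → ℝ) (f : ℕ → Fin M → (Fin k → ℕ) → ℝ)
    (t : ℕ) (n : Fin k → ℕ) (j : Fin M) : ℝ :=
  ∑ r ∈ Finset.univ.filter
      (fun r : Fin (t + 1) → Fin M => r (Fin.last t) = j ∧ nvec k (pad r) t = n),
    wpath k pi0 p f0 f r

end MRS

namespace MRS

lemma counter_succ {M : ℕ} (r : ℕ → Fin M) (u i : ℕ) :
    counter r (u+1) i = if (r u : ℕ) = i then 1 else counter r u i + 1 := by
  unfold counter
  have hr : (Finset.range (u+1)).filter (fun τ => (r τ : ℕ) = i) =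
      if (r u : ℕ) = i then insert u ((Finset.range u).filter (fun τ => (r τ : ℕ) = i))
      else (Finset.range u).filter (fun τ => (r τ : ℕ) = i) := by
    rw [Finset.range_add_one, Finset.filter_insert]
  by_cases h : (r u : ℕ) = i
  · rw [if_pos h]
    have hmem : u ∈ (Finset.range (u+1)).filter (fun τ => (r τ : ℕ) = i) := by simp [h]
    have hne : ((Finset.range (u+1)).filter (fun τ => (r τ : ℕ) = i)).Nonempty := ⟨u, hmem⟩
    rw [dif_pos hne]
    have h1 := Finset.le_max' _ u hmem
    have h2 := Finset.max'_mem _ hne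
    simp only [Finset.mem_filter, Finset.mem_range] at h2
    omega
  · simp only [if_neg h] at hr ⊢
    simp only [hr]
    split_ifs with hne
    · have h2 := Finset.max'_mem _ hne
      simp only [Finset.mem_filter, Finset.mem_range] at h2
      omega
    · rfl

lemma counter_bd {M : ℕ} (r : ℕ → Fin M) (u i : ℕ) :
    1 ≤ counter r u i ∧ counter r u i ≤ u + 1 := by
  induction u with
  | zero => simp [counter]
  | succ u ih => rw [counter_succ]; split_ifs <;> omega

lemma counter_congr {M : ℕ} (r r' : ℕ → Fin M) (u i : ℕ) (h : ∀ s < u, r s = r' s) :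
    counter r u i = counter r' u i := by
  induction u with
  | zero => simp [counter]
  | succ u ih =>
    rw [counter_succ, counter_succ, h u (by omega), ih (fun s hs => h s (by omega))]

lemma pad_snoc {M u : ℕ} (r : Fin (u+1) → Fin M) (a : Fin M) (s : ℕ) (hs : s ≤ u) :
    pad (t := u+1) (Fin.snoc (α := fun _ => Fin M) r a) s = pad r s := by
  unfold pad
  have h1 : min s (u+1) = s := by omega
  have h2 : min s u = s := by omega
  have : (⟨min s (u+1), Nat.lt_succ_of_le (min_le_right s (u+1))⟩ : Fin (u+1+1)) =
    Fin.castSucc ⟨min s u, Nat.lt_succ_of_le (min_le_right s u)⟩ := by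
    ext; simp [h1, h2]
  rw [this, Fin.snoc_castSucc]

lemma pad_last {M u : ℕ} (r : Fin (u+1) → Fin M) : pad r u = r (Fin.last u) := by
  unfold pad; congr 1; ext; simp

lemma nvec_snoc {M u : ℕ} (k : ℕ) (r : Fin (u+1) → Fin M) (a : Fin M) (s : ℕ) (hs : s ≤ u+1) :
    nvec k (pad (t := u+1) (Fin.snoc (α := fun _ => Fin M) r a)) s = nvec k (pad r) s := by
  funext i
  exact counter_congr _ _ _ _ (fun s' hs' => pad_snoc r a s' (by omega))

lemma wpath_snoc {M u : ℕ} (k : ℕ) (pi0 : Fin M → ℝ) (p : Fin M → Fin M → ℝ)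
    (f0 : Fin M → ℝ) (f : ℕ → Fin M → (Fin k → ℕ) → ℝ) (r : Fin (u+1) → Fin M) (a : Fin M) :
    wpath k pi0 p f0 f (t := u+1) (Fin.snoc (α := fun _ => Fin M) r a) =
      wpath k pi0 p f0 f r * (p (r (Fin.last u)) a * f (u+1) a (nvec k (pad r) (u+1))) := by
  have h0 : (Fin.snoc (α := fun _ => Fin M) r a : Fin (u+1+1) → Fin M) 0 = r 0 := by
    rw [← Fin.castSucc_zero, Fin.snoc_castSucc]
  unfold wpath
  rw [Finset.prod_Icc_succ_top (by omega), nvec_snoc k r a (u+1) le_rfl, pad_last, Fin.snoc_last,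
    Nat.add_sub_cancel, pad_snoc r a u le_rfl, pad_last, h0, ← mul_assoc]
  congr 2
  apply Finset.prod_congr rfl
  intro s hs
  rw [Finset.mem_Icc] at hs
  rw [nvec_snoc k r a s (by omega), pad_snoc r a s hs.2, pad_snoc r a (s-1) (by omega)]

lemma alpha_eq {M : ℕ} (k : ℕ) (pi0 : Fin M → ℝ) (p : Fin M → Fin M → ℝ)
    (f0 : Fin M → ℝ) (f : ℕ → Fin M → (Fin k → ℕ) → ℝ)
    (u : ℕ) (n : Fin k → ℕ) (j : Fin M) :
    alpha k pi0 p f0 f (u+1) n j = ∑ r : Fin (u+1) → Fin M,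
      if nvec k (pad r) (u+1) = n then
        wpath k pi0 p f0 f r * (p (r (Fin.last u)) j * f (u+1) j n) else 0 := by
  unfold alpha
  rw [Finset.sum_filter, ← (Fin.snocEquiv (fun _ : Fin (u+1+1) => Fin M)).sum_comp,
    Fintype.sum_prod_type, Finset.sum_comm]
  apply Finset.sum_congr rfl
  intro r _
  have : ∀ a : Fin M, (Fin.snocEquiv (fun _ : Fin (u+1+1) => Fin M)) (a, r) =
    Fin.snoc (α := fun _ => Fin M) r a := fun a => rfl
  simp only [this, Fin.snoc_last, nvec_snoc k r _ (u+1) le_rfl, wpath_snoc, ite_and]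
  simp only [Finset.sum_ite_eq', Finset.mem_univ, if_true]
  split_ifs with h
  · rw [h]
  · rfl

end MRS

open MRS in
/-- Forward recursion when the counter of the AR regime `ℓ` equals `1`:
`α^(t)_n(j) = f_t(j,n) · p_{ℓj} · ∑_{m=1}^t α^(t-1)_{n - 1 + m·e_ℓ}(ℓ)`. -/
theorem forward_recursion_reset (M k T : ℕ) (hM : 2 ≤ M) (hk : 1 ≤ k) (hkM : k < M)
    (hT : 1 ≤ T)
    (pi0 : Fin M → ℝ) (p : Fin M → Fin M → ℝ) (f0 : Fin M → ℝ)
    (f : ℕ → Fin M → (Fin k → ℕ) → ℝ)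
    (hpi : ∀ i, 0 ≤ pi0 i) (hpisum : ∑ i, pi0 i = 1)
    (hp : ∀ i j, 0 ≤ p i j) (hprow : ∀ i, ∑ j, p i j = 1)
    (hf0 : ∀ i, 0 ≤ f0 i) (hf : ∀ t j n, 0 ≤ f t j n)
    (t : ℕ) (ht1 : 1 ≤ t) (htT : t ≤ T) (j : Fin M)
    (n : Fin k → ℕ) (hn : n ∈ Sset k t) (ℓ : Fin k) (hℓ : n ℓ = 1) :
    alpha k pi0 p f0 f t n j
      = f t j n * p (Fin.castLE hkM.le ℓ) j *
          ∑ m ∈ Finset.Icc 1 t,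
            alpha k pi0 p f0 f (t - 1) (fun i => n i - 1 + if i = ℓ then m else 0)
              (Fin.castLE hkM.le ℓ) := by
  obtain ⟨u, rfl⟩ : ∃ u, t = u + 1 := ⟨t - 1, by omega⟩
  have hpos : ∀ i, 1 ≤ n i := by
    intro i
    have := (Finset.mem_filter.1 hn).1
    rw [Fintype.mem_piFinset] at this
    exact (Finset.mem_Icc.1 (this i)).1
  rw [alpha_eq, Nat.add_sub_cancel]
  unfold alpha
  simp only [Finset.sum_filter]
  rw [Finset.sum_comm, Finset.mul_sum]
  apply Finset.sum_congr rfl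
  intro r _
  have key : ∀ i : Fin k, nvec k (pad r) (u+1) i =
      if (r (Fin.last u) : ℕ) = i then 1 else nvec k (pad r) u i + 1 := by
    intro i
    unfold nvec
    rw [counter_succ, pad_last]
  have hb : ∀ i : Fin k, 1 ≤ nvec k (pad r) u i ∧ nvec k (pad r) u i ≤ u + 1 :=
    fun i => counter_bd _ _ _
  have hl : r (Fin.last u) = Fin.castLE hkM.le ℓ ↔ (r (Fin.last u) : ℕ) = ℓ := by
    rw [Fin.ext_iff]; rfl
  by_cases h : nvec k (pad r) (u+1) = n
  · rw [if_pos h]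
    have hr : (r (Fin.last u) : ℕ) = ℓ := by
      by_contra hc
      have := key ℓ
      rw [if_neg hc, h, hℓ] at this
      have := (hb ℓ).1
      omega
    rw [Finset.sum_eq_single (nvec k (pad r) u ℓ)]
    · rw [if_pos, hl.2 hr]
      · ring
      · refine ⟨hl.2 hr, ?_⟩
        funext i
        have hi := key i
        rw [h] at hi
        by_cases hil : i = ℓ
        · subst hil; simp [hℓ]
        · have : ¬ (r (Fin.last u) : ℕ) = i := by
            rw [hr]; intro hc; exact hil (Fin.ext hc.symm)
          rw [if_neg this] at hi
          rw [if_neg hil]; omega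
    · intro m _ hm
      rw [if_neg]
      rintro ⟨_, h2⟩
      apply hm
      have := congrFun h2 ℓ
      simp [hℓ] at this
      exact this.symm
    · intro hc
      exact absurd (Finset.mem_Icc.2 (hb ℓ)) hc
  · rw [if_neg h, Finset.sum_eq_zero, mul_zero]
    intro m _
    rw [if_neg]
    rintro ⟨h1, h2⟩
    apply h
    funext i
    have h1 := hl.1 h1
    rw [key i]
    by_cases hil : i = ℓ
    · subst hil; rw [if_pos h1, hℓ]
    · have : ¬ (r (Fin.last u) : ℕ) = i := by
        rw [h1]; intro hc; exact hil (Fin.ext hc.symm)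
      have h3 := congrFun h2 i
      simp only [if_neg hil] at h3
      rw [if_neg this, h3]
      have := hpos i
      omega
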